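/- Let S be a type of system configurations, M a type of monitor states, R a binary relation on S, f : S → S → M → M a monitor-update function, init : S, and m0 : M. Define the monitored extension R' on S × M by R' (s, m) (s', m') iff R s s' and m' = f s s' m. If for every state s reachable from init under R any two R-successors of s are equal, then for every pair p reachable from (init, m0) under R' any two R'-successors of p are equal. (This is the abstract content of Theorem 2: equipping the composed model with a monitor object, whose attribute update in each transformed rule is determined by the underlying step, preserves absence of nondeterminism.) -/

import Mathlib

/-- The monitored extension of a relation `R` on `S` by a monitor-update function
`f : S → S → M → M`: `R' (s, m) (s', m')` iff `R s s'` and `m' = f s s' m`. -/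
def monitoredExt {S M : Type*} (R : S → S → Prop) (f : S → S → M → M) :
    S × M → S × M → Prop :=
  fun p q => R p.1 q.1 ∧ q.2 = f p.1 q.1 p.2

/-- **Theorem 2 (abstract content).** If every state reachable from `init` under `R`
has deterministic `R`-successors, then every pair reachable from `(init, m0)` under the
monitored extension `R'` has deterministic `R'`-successors. -/
theorem monitored_preserves_and {S M : Type*} (R : S → S → Prop) (f : S → S → M → M)
    (init : S) (m0 : M)
    (h : ∀ s, Relation.ReflTransGen R init s → ∀ t t', R s t → R s t' → t = t') :
    ∀ p, Relation.ReflTransGen (monitoredExt R f) (init, m0) p →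
      ∀ q q', monitoredExt R f p q → monitoredExt R f p q' → q = q' := by
  rintro p hp ⟨t, n⟩ ⟨t', n'⟩ ⟨hR, hn⟩ ⟨hR', hn'⟩
  -- Forgetting the monitor maps monitored runs to runs of `R`.
  have hreach : Relation.ReflTransGen R init p.1 := hp.lift Prod.fst fun _ _ hab => hab.1
  obtain rfl : t = t' := h p.1 hreach t t' hR hR'
  exact Prod.ext rfl (hn.trans hn'.symm)
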